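/- For every nonnegative integer n, b'₅(100n+11) ≡ 0 (mod 4). -/

import Mathlib

/-- `b5' n` is the number of partitions of `n` into distinct parts,
none of which is divisible by `5` (with `b5' 0 = 1`). -/
def b5' (n : ℕ) : ℕ :=
  ((Nat.Partition.distincts n).filter (fun p => ∀ i ∈ p.parts, ¬ (5 ∣ i))).card

open PowerSeries Finset
open scoped PowerSeries.WithPiTopology

namespace B5

section gauss
variable {A : Type*} [CommRing A]

/-- Gaussian binomials. -/
def gauss (p : A) : ℕ → ℕ → A
  | _, 0 => 1
  | 0, _ + 1 => 0
  | n + 1, k + 1 => gauss p n k + p ^ (k + 1) * gauss p n (k + 1)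

/-- q-Pochhammer. -/
def poch (p : A) (m : ℕ) : A := ∏ i ∈ range m, (1 - p ^ (i + 1))

lemma gauss_zero (p : A) (n : ℕ) : gauss p n 0 = 1 := by cases n <;> rfl

lemma gauss_succ (p : A) (n k : ℕ) :
    gauss p (n + 1) (k + 1) = gauss p n k + p ^ (k + 1) * gauss p n (k + 1) := rfl

lemma gauss_lt (p : A) (n : ℕ) : ∀ k, n < k → gauss p n k = 0 := by
  induction n with
  | zero => intro k hk; cases k with
    | zero => omega
    | succ k => rfl
  | succ n ih => intro k hk; cases k with
    | zero => omega
    | succ k => rw [gauss_succ, ih _ (by omega), ih _ (by omega)]; ring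

lemma gauss_self (p : A) (n : ℕ) : gauss p n n = 1 := by
  induction n with
  | zero => rfl
  | succ n ih => rw [gauss_succ, ih, gauss_lt p n _ (by omega)]; ring

lemma poch_succ (p : A) (m : ℕ) : poch p (m + 1) = poch p m * (1 - p ^ (m + 1)) := by
  simp [poch, prod_range_succ]

lemma gauss_poch (p : A) (n : ℕ) : ∀ a b, a + b = n →
    gauss p n a * (poch p a * poch p b) = poch p n := by
  induction n with
  | zero => intro a b h; obtain ⟨rfl, rfl⟩ : a = 0 ∧ b = 0 := by omega
            simp [poch, gauss_zero]
  | succ n ih =>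
    intro a b h
    cases a with
    | zero => obtain rfl : b = n + 1 := by omega
              simp [gauss_zero, poch]
    | succ a =>
      cases b with
      | zero => obtain rfl : a = n := by omega
                simp [gauss_self, poch]
      | succ b =>
        have h1 := ih a (b + 1) (by omega)
        have h2 := ih (a + 1) b (by omega)
        rw [gauss_succ, poch_succ p n]
        have e : (1 : A) - p ^ (n + 1) = (1 - p ^ (a + 1)) + p ^ (a + 1) * (1 - p ^ (b + 1)) := by
          rw [show n + 1 = (a + 1) + (b + 1) by omega, pow_add]; ring
        rw [e, mul_add]
        nth_rewrite 1 [← h1]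
        rw [← h2, poch_succ p a, poch_succ p b]
        ring

lemma gauss_thm (p y : A) (n : ℕ) : ∀ z : A,
    ∏ i ∈ range n, (y + z * p ^ i) =
      ∑ k ∈ range (n + 1), gauss p n k * p ^ (k.choose 2) * z ^ k * y ^ (n - k) := by
  induction n with
  | zero => intro z; simp [gauss_zero]
  | succ n ih =>
    intro z
    rw [prod_range_succ']
    have : ∏ k ∈ range n, (y + z * p ^ (k + 1)) = ∏ k ∈ range n, (y + (z * p) * p ^ k) :=
      prod_congr rfl fun k _ => by ring
    rw [this, ih, sum_range_succ' _ (n + 1), mul_add]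
    simp only [gauss_succ, gauss_zero, pow_zero, mul_one]
    have hz : ∀ k ∈ range (n + 1),
       (gauss p n k + p ^ (k + 1) * gauss p n (k + 1)) * p ^ (k + 1).choose 2 * z ^ (k + 1) * y ^ (n + 1 - (k + 1))
        = (gauss p n k * p ^ (k.choose 2) * (z * p) ^ k * y ^ (n - k)) * z +
          (gauss p n (k + 1) * p ^ ((k + 1).choose 2) * (z * p) ^ (k + 1) * y ^ (n - k)) := by
      intro k _
      rw [show n + 1 - (k + 1) = n - k by omega, Nat.choose_succ_succ' k 1, Nat.choose_one_right, pow_add]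
      ring
    rw [sum_congr rfl hz, sum_add_distrib, ← sum_mul, add_assoc, add_comm]
    congr 1
    rw [sum_range_succ' _ n, sum_range_succ _ n, gauss_lt p n (n + 1) (by omega), add_mul, sum_mul]
    simp only [gauss_zero, Nat.choose_zero_succ, pow_zero, zero_mul, add_zero, Nat.sub_zero, mul_one, one_mul]
    congr 1
    · refine sum_congr rfl fun k hk => ?_
      rw [mem_range] at hk
      rw [show n - k = (n - (k + 1)) + 1 by omega, pow_succ]
      ring
    · simp [pow_succ]

end gauss

/-- theta exponent -/
def te (r s : ℕ) (k : ℤ) : ℕ := ((r * (k * (k + 1)) + s * (k * (k - 1))) / 2).toNat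

lemma te_spec (r s : ℕ) (k : ℤ) : 2 * (te r s k : ℤ) = r * (k * (k + 1)) + s * (k * (k - 1)) := by
  have h1 : Even (k * (k + 1)) := Int.even_mul_succ_self k
  have h2 : Even (k * (k - 1)) := Int.even_mul_pred_self k
  have h3 : Even ((r : ℤ) * (k * (k + 1)) + s * (k * (k - 1))) := (h1.mul_left _).add (h2.mul_left _)
  have p1 : 0 ≤ k * (k + 1) := by
    rcases le_or_gt 0 k with h | h
    · positivity
    · nlinarith
  have p2 : 0 ≤ k * (k - 1) := by
    rcases le_or_gt k 0 with h | h
    · nlinarith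
    · nlinarith
  have p3 : 0 ≤ (r : ℤ) * (k * (k + 1)) + s * (k * (k - 1)) := by positivity
  unfold te
  rw [Int.toNat_of_nonneg (by omega)]
  exact Int.two_mul_ediv_two_of_even h3

lemma te_ge (r s : ℕ) (hr : 0 < r) (hs : 0 < s) (k : ℤ) : |k| ≤ te r s k := by
  have h := te_spec r s k
  have p1 : 0 ≤ k * (k + 1) := by
    rcases le_or_gt 0 k with h | h
    · positivity
    · nlinarith
  have p2 : 0 ≤ k * (k - 1) := by
    rcases le_or_gt k 0 with h | h
    · nlinarith
    · nlinarith
  have r1 : (1 : ℤ) ≤ r := by exact_mod_cast hr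
  have s1 : (1 : ℤ) ≤ s := by exact_mod_cast hs
  have : 2 * (te r s k : ℤ) ≥ k * (k + 1) + k * (k - 1) := by nlinarith
  rcases abs_cases k with ⟨h, _⟩ | ⟨h, _⟩ <;> rw [h] <;> nlinarith

section theta
variable (R : Type*) [CommRing R]

/-- theta series -/
noncomputable def Th (r s : ℕ) : R⟦X⟧ :=
  PowerSeries.mk fun N => ∑ k ∈ Icc (-(N : ℤ)) N, if te r s k = N then 1 else 0

lemma Th_coeff (r s : ℕ) (hr : 0 < r) (hs : 0 < s) (N M : ℕ) (h : N ≤ M) :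
    coeff N (Th R r s) = ∑ k ∈ Icc (-(M : ℤ)) M, if te r s k = N then 1 else 0 := by
  rw [Th, coeff_mk]
  apply sum_subset
  · intro k; simp only [Finset.mem_Icc]; omega
  · intro k _ hk
    rw [if_neg]
    rintro rfl
    have := te_ge r s hr hs k
    rw [abs_le] at this
    exact hk (Finset.mem_Icc.2 this)

lemma Th_trunc (r s : ℕ) (hr : 0 < r) (hs : 0 < s) (M : ℕ) :
    (X : R⟦X⟧) ^ (M + 1) ∣ Th R r s - ∑ k ∈ Icc (-(M : ℤ)) M, X ^ te r s k := by
  rw [X_pow_dvd_iff]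
  intro N hN
  rw [map_sub, Th_coeff R r s hr hs N M (by omega), map_sum]
  simp [coeff_X_pow, eq_comm]

/-- finite triple product, shifted -/
lemma finite_jtp (r s m : ℕ) :
    (∏ i ∈ range (m + 1), (1 + (X : R⟦X⟧) ^ (r + (r + s) * i))) *
    (∏ i ∈ range (m + 1), (1 + (X : R⟦X⟧) ^ (s + (r + s) * i))) =
    ∑ k ∈ range (2 * (m + 1) + 1), gauss ((X : R⟦X⟧) ^ (r + s)) (2 * (m + 1)) k *
      X ^ te r s ((k : ℤ) - (m + 1)) := by
  set d := r + s with hd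
  set p : R⟦X⟧ := X ^ d with hp
  have h := gauss_thm p (X ^ (s + d * m)) (2 * (m + 1)) 1
  set E : ℕ := d * (∑ i ∈ range (m + 1), i) + (m + 1) * (s + d * m) with hE
  have hE2 : 2 * E = d * (m * (m + 1)) + 2 * ((m + 1) * (s + d * m)) := by
    rw [hE, mul_add]
    have := Finset.sum_range_id_mul_two (m + 1)
    simp only [Nat.add_sub_cancel] at this
    congr 1
    rw [mul_left_comm, mul_comm 2, this]; ring
  have hL : ∏ i ∈ range (2 * (m + 1)), ((X : R⟦X⟧) ^ (s + d * m) + 1 * p ^ i) =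
     X ^ E * ((∏ i ∈ range (m + 1), (1 + (X : R⟦X⟧) ^ (r + d * i))) *
    (∏ i ∈ range (m + 1), (1 + (X : R⟦X⟧) ^ (s + d * i)))) := by
    rw [two_mul, prod_range_add]
    have a1 : ∏ x ∈ range (m + 1), ((X : R⟦X⟧) ^ (s + d * m) + 1 * p ^ x) =
        X ^ (d * (∑ i ∈ range (m + 1), i)) * (∏ i ∈ range (m + 1), (1 + (X : R⟦X⟧) ^ (s + d * i))) := by
      rw [← prod_range_reflect (fun i => (1 + (X : R⟦X⟧) ^ (s + d * i))), mul_sum, ← prod_pow_eq_pow_sum, ← prod_mul_distrib]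
      refine prod_congr rfl fun i hi => ?_
      rw [mem_range] at hi
      obtain ⟨j, rfl⟩ : ∃ j, m = i + j := ⟨m - i, by omega⟩
      rw [show i + j + 1 - 1 - i = j by omega, hp]
      ring
    have a2 : ∏ x ∈ range (m + 1), ((X : R⟦X⟧) ^ (s + d * m) + 1 * p ^ (m + 1 + x)) =
        X ^ ((m + 1) * (s + d * m)) * (∏ i ∈ range (m + 1), (1 + (X : R⟦X⟧) ^ (r + d * i))) := by
      rw [mul_comm (m + 1), pow_mul]
      have hc : ((X : R⟦X⟧) ^ (s + d * m)) ^ (m + 1) = ∏ _i ∈ range (m + 1), (X : R⟦X⟧) ^ (s + d * m) := by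
        simp
      rw [hc, ← prod_mul_distrib]
      refine prod_congr rfl fun i hi => ?_
      rw [hp, mul_add, mul_one, one_mul, ← pow_mul, ← pow_add]
      congr 2
      rw [hd]; ring
    rw [a1, a2, hE, pow_add]; ring
  rw [hL] at h
  have hR : ∑ k ∈ range (2 * (m + 1) + 1), gauss p (2 * (m + 1)) k * p ^ k.choose 2 * 1 ^ k *
       (X ^ (s + d * m)) ^ (2 * (m + 1) - k) = X ^ E * ∑ k ∈ range (2 * (m + 1) + 1), gauss p (2 * (m + 1)) k *
      X ^ te r s ((k : ℤ) - (m + 1)) := by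
    rw [mul_sum]
    refine sum_congr rfl fun k hk => ?_
    rw [mem_range] at hk
    rw [one_pow, mul_one, mul_left_comm, mul_assoc, hp, ← pow_mul, ← pow_mul, ← pow_add, ← pow_add]
    congr 2
    have t := te_spec r s ((k : ℤ) - (m + 1))
    obtain ⟨j, hj⟩ : ∃ j, 2 * (m + 1) = k + j := ⟨2 * (m + 1) - k, by omega⟩
    rw [show 2 * (m + 1) - k = j by omega]
    have c : (2 : ℤ) * (k.choose 2 : ℕ) = k * (k - 1) := by
      have := Nat.triangle_succ (k - 1)
      have h2 := Nat.choose_two_right k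
      have h3 : 2 * (k.choose 2) = k * (k - 1) := by
        rw [h2]; exact Nat.two_mul_div_two_of_even (Nat.even_mul_pred_self k)
      rcases k with _ | k
      · simp
      · have h4 : 2 * (((k + 1).choose 2 : ℕ) : ℤ) = ((k + 1 : ℕ) : ℤ) * (((k + 1) - 1 : ℕ) : ℤ) := by exact_mod_cast h3
        rw [h4]; push_cast; simp
    have hj' : (k : ℤ) = 2 * (m + 1) - j := by have : (2 * (m + 1) : ℤ) = k + j := by exact_mod_cast hj
                                               linarith
    have hE3 : (2 : ℤ) * E = d * (m * (m + 1)) + 2 * ((m + 1) * (s + d * m)) := by exact_mod_cast hE2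
    have hd' : (d : ℤ) = r + s := by exact_mod_cast hd
    have : (2 : ℤ) * ((d * k.choose 2 + (s + d * m) * j : ℕ) : ℤ) = 2 * ((E + te r s ((k : ℤ) - (m + 1)) : ℕ) : ℤ) := by
      push_cast
      rw [mul_add, mul_add, hE3, t, mul_left_comm, c, hd', hj']
      ring
    omega
  rw [hR] at h
  ext N
  have := congrArg (coeff (N + E)) h
  rwa [coeff_X_pow_mul, coeff_X_pow_mul] at this

end theta

set_option linter.unusedSectionVars false
section prods
variable {R : Type*} [CommRing R] [TopologicalSpace R] [DiscreteTopology R]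

lemma mult_of_dvd (h : ℕ → R⟦X⟧) (hh : ∀ i, X ^ i ∣ h i) : Multipliable (fun i => 1 + h i) := by
  apply WithPiTopology.multipliable_one_add_of_tendsto_order_atTop_nhds_top
  refine ENat.tendsto_nhds_top_iff_natCast_lt.mpr fun n => Filter.eventually_atTop.mpr ⟨n + 1, ?_⟩
  intro m hm
  have := X_pow_dvd_iff.1 (hh m)
  refine lt_of_lt_of_le ?_ (nat_le_order _ m this)
  exact_mod_cast hm

lemma prod_trunc (h : ℕ → R⟦X⟧) (hh : ∀ i, X ^ i ∣ h i) (m k : ℕ) :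
    X ^ m ∣ ∏ i ∈ range (m + k), (1 + h i) - ∏ i ∈ range m, (1 + h i) := by
  induction k with
  | zero => simp
  | succ k ih =>
    rw [← add_assoc, prod_range_succ]
    have : (X : R⟦X⟧) ^ m ∣ h (m + k) := (pow_dvd_pow _ (by omega)).trans (hh _)
    have e : (∏ i ∈ range (m + k), (1 + h i)) * (1 + h (m + k)) - ∏ i ∈ range m, (1 + h i) =
      (∏ i ∈ range (m + k), (1 + h i) - ∏ i ∈ range m, (1 + h i)) +
       (∏ i ∈ range (m + k), (1 + h i)) * h (m + k) := by ring
    rw [e]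
    exact dvd_add ih (this.mul_left _)

lemma tprod_trunc (h : ℕ → R⟦X⟧) (hh : ∀ i, X ^ i ∣ h i) (m : ℕ) :
    X ^ m ∣ ∏' i, (1 + h i) - ∏ i ∈ range m, (1 + h i) := by
  rw [X_pow_dvd_iff]
  intro n hn
  have t := (mult_of_dvd h hh).hasProd.tendsto_prod_nat
  rw [WithPiTopology.tendsto_iff_coeff_tendsto] at t
  have t := t n
  rw [nhds_discrete, Filter.tendsto_pure] at t
  obtain ⟨M, hM⟩ := Filter.eventually_atTop.1 t
  have := hM (m + M) (by omega)
  rw [map_sub, ← this, ← map_sub]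
  exact X_pow_dvd_iff.1 (prod_trunc h hh m M) n hn

/-- generic product -/
noncomputable def Pr (c : ℕ → R) : R⟦X⟧ := ∏' n, (1 + C (c n) * X ^ n)

lemma Pr_mult (c : ℕ → R) : Multipliable (fun n => 1 + C (c n) * (X : R⟦X⟧) ^ n) :=
  mult_of_dvd _ fun _ => Dvd.intro_left _ rfl

lemma Pr_mul (c c' c'' : ℕ → R)
    (h : ∀ n, (c n = 0 ∧ c' n = c'' n) ∨ (c' n = 0 ∧ c n = c'' n)) :
    Pr c * Pr c' = Pr c'' := by
  unfold Pr
  rw [← (Pr_mult c).tprod_mul (Pr_mult c')]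
  refine tprod_congr fun n => ?_
  rcases h n with ⟨h1, h2⟩ | ⟨h1, h2⟩ <;> simp [h1, h2]

/-- expand -/
noncomputable def ex (j : ℕ) [NeZero j] : R⟦X⟧ →ₐ[R] R⟦X⟧ := PowerSeries.expand j (NeZero.ne j)

lemma ex_ex (i j k : ℕ) [NeZero i] [NeZero j] [NeZero k] (h : i * j = k) (a : R⟦X⟧) :
    ex i (ex j a) = ex k a := by
  subst h
  exact (PowerSeries.expand_mul i (NeZero.ne i) j (NeZero.ne j) a).symm

lemma ex_coeff_mul (j : ℕ) [NeZero j] (a : R⟦X⟧) (m : ℕ) : coeff (j * m) (ex j a) = coeff m a :=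
  coeff_expand_mul _ _ _ _

lemma ex_coeff_not (j : ℕ) [NeZero j] (a : R⟦X⟧) (m : ℕ) (h : ¬ j ∣ m) : coeff m (ex j a) = 0 :=
  coeff_expand_of_not_dvd _ _ _ h

lemma ex_X (j : ℕ) [NeZero j] : ex j (X : R⟦X⟧) = X ^ j := expand_X _ _

lemma ex_C (j : ℕ) [NeZero j] (r : R) : ex j (C r : R⟦X⟧) = C r := expand_C _ _ _

lemma ex_cont (j : ℕ) [NeZero j] : Continuous (ex j : R⟦X⟧ → R⟦X⟧) := by
  rw [continuous_iff_continuousAt]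
  intro a
  rw [ContinuousAt, WithPiTopology.tendsto_iff_coeff_tendsto]
  intro d
  by_cases h : j ∣ d
  · obtain ⟨m, rfl⟩ := h
    simp only [ex_coeff_mul]
    exact (WithPiTopology.continuous_coeff R m).continuousAt
  · simp only [ex_coeff_not j _ d h]
    exact tendsto_const_nhds

lemma ex_Pr' (j : ℕ) [NeZero j] (c : ℕ → R) :
    ex j (Pr c) = ∏' n, (1 + C (c n) * X ^ (j * n)) := by
  unfold Pr
  rw [(Pr_mult c).map_tprod (ex j) (ex_cont j)]
  refine tprod_congr fun n => ?_
  simp [ex_X, ex_C, ← pow_mul]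

lemma ex_Pr (j : ℕ) [NeZero j] (c : ℕ → R) :
    ex j (Pr c) = Pr (fun n => if j ∣ n then c (n / j) else 0) := by
  rw [ex_Pr']
  unfold Pr
  have hj : 0 < j := Nat.pos_of_ne_zero (NeZero.ne j)
  have inj : Function.Injective (fun n : ℕ => j * n) := fun a b h => Nat.eq_of_mul_eq_mul_left hj h
  rw [← inj.tprod_eq (f := fun n => 1 + C (if j ∣ n then c (n / j) else 0) * (X : R⟦X⟧) ^ n)]
  · refine tprod_congr fun n => ?_
    simp [Nat.mul_div_cancel_left _ hj]
  · intro n hn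
    by_cases h : j ∣ n
    · obtain ⟨m, rfl⟩ := h; exact ⟨m, rfl⟩
    · simp [h] at hn

/-- indicator of a residue class -/
noncomputable def U (r d : ℕ) : R⟦X⟧ := Pr (fun n => if n % d = r % d then 1 else 0)

lemma U_eq (r d : ℕ) (hr : 0 < r) (hd : r < d) :
    (U r d : R⟦X⟧) = ∏' i, (1 + X ^ (r + d * i)) := by
  unfold U Pr
  have inj : Function.Injective (fun n : ℕ => r + d * n) := fun a b h => by
    exact Nat.eq_of_mul_eq_mul_left (by omega : 0 < d) (Nat.add_left_cancel h)
  rw [← inj.tprod_eq (f := fun n => 1 + C (if n % d = r % d then 1 else 0) * (X : R⟦X⟧) ^ n)]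
  · refine tprod_congr fun n => ?_
    simp
  · intro n hn
    by_cases h : n % d = r % d
    · refine ⟨n / d, ?_⟩
      rw [Nat.mod_eq_of_lt hd] at h
      have := Nat.mod_add_div n d
      simp only; omega
    · simp [h] at hn

/-- Euler function -/
noncomputable def D : R⟦X⟧ := Pr (fun n => if n = 0 then 0 else -1)
/-- distinct partitions -/
noncomputable def W : R⟦X⟧ := Pr (fun n => if n = 0 then 0 else 1)

lemma D_eq : (D : R⟦X⟧) = ∏' n, (1 - X ^ (n + 1)) := by
  unfold D Pr
  rw [← Nat.succ_injective.tprod_eq (f := fun n => 1 + C (if n = 0 then 0 else -1) * (X : R⟦X⟧) ^ n)]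
  · refine tprod_congr fun n => ?_
    simp [sub_eq_add_neg]
  · intro n hn
    cases n with
    | zero => simp at hn
    | succ n => exact ⟨n, rfl⟩

lemma exD_eq (d : ℕ) [NeZero d] : ex d (D : R⟦X⟧) = ∏' n, (1 + -X ^ (d * (n + 1))) := by
  rw [D_eq, (WithPiTopology.multipliable_one_sub_X_pow R).map_tprod (ex d) (ex_cont d)]
  refine tprod_congr fun n => ?_
  simp [ex_X, ← pow_mul, sub_eq_add_neg]

lemma poch_trunc (d : ℕ) [NeZero d] (m : ℕ) :
    (X : R⟦X⟧) ^ m ∣ ex d D - poch (X ^ d) m := by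
  rw [exD_eq]
  have hd : 0 < d := Nat.pos_of_ne_zero (NeZero.ne d)
  have := tprod_trunc (fun n => -(X : R⟦X⟧) ^ (d * (n + 1))) (fun i => by
    rw [dvd_neg]; exact pow_dvd_pow _ (by nlinarith)) m
  convert this using 3
  refine prod_congr rfl fun n _ => ?_
  rw [← pow_mul, sub_eq_add_neg]

lemma cc_Pr (c : ℕ → R) (h : c 0 = 0) : constantCoeff (Pr c) = 1 := by
  have := X_pow_dvd_iff.1 (tprod_trunc (fun n => C (c n) * (X : R⟦X⟧) ^ n) (fun _ => Dvd.intro_left _ rfl) 1) 0 (by omega)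
  simp [h] at this
  rw [sub_eq_zero] at this
  exact this

lemma unit_Pr (c : ℕ → R) (h : c 0 = 0) : IsUnit (Pr c) := by
  rw [PowerSeries.isUnit_iff_constantCoeff, cc_Pr c h]; exact isUnit_one

lemma unit_D : IsUnit (D : R⟦X⟧) := unit_Pr _ (by simp)
lemma unit_W : IsUnit (W : R⟦X⟧) := unit_Pr _ (by simp)
lemma unit_ex (j : ℕ) [NeZero j] {a : R⟦X⟧} (h : IsUnit a) : IsUnit (ex j a) := h.map (ex j)

theorem jtp (r s d : ℕ) [NeZero d] (hd : r + s = d) (hr : 0 < r) (hs : 0 < s) :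
    U r d * U s d * ex d D = Th R r s := by
  rw [← sub_eq_zero]
  ext N
  rw [map_zero]
  suffices h : (X : R⟦X⟧) ^ (N + 1) ∣ U r d * U s d * ex d D - Th R r s from
    X_pow_dvd_iff.1 h N (by omega)
  set I := Ideal.span {(X : R⟦X⟧) ^ (N + 1)} with hI
  let q := Ideal.Quotient.mk I
  have key : ∀ a b : R⟦X⟧, X ^ (N + 1) ∣ a - b ↔ q a = q b := by
    intro a b
    rw [Ideal.Quotient.eq, hI, Ideal.mem_span_singleton]
  rw [key]
  have tr : ∀ t : ℕ, 0 < t → t < d → q (U t d) = q (∏ i ∈ range (N + 1), (1 + X ^ (t + d * i))) := by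
    intro t h1 h2
    rw [← key, U_eq t d h1 h2]
    exact tprod_trunc _ (fun i => pow_dvd_pow _ (by nlinarith)) _
  rw [map_mul, map_mul, tr r hr (by omega), tr s hs (by omega), ← map_mul, ← map_mul]
  have fj := finite_jtp R r s N
  rw [hd] at fj
  rw [fj, sum_mul]
  have h2 : q (Th R r s) = q (∑ k ∈ Icc (-((N + 1 : ℕ) : ℤ)) (N + 1 : ℕ), X ^ te r s k) := by
    rw [← key]
    exact (pow_dvd_pow _ (by omega)).trans (Th_trunc R r s hr hs (N + 1))
  have h3 : ∑ k ∈ Icc (-((N + 1 : ℕ) : ℤ)) (N + 1 : ℕ), (X : R⟦X⟧) ^ te r s k =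
     ∑ k ∈ range (2 * (N + 1) + 1), X ^ te r s ((k : ℤ) - (N + 1)) := by
    symm
    refine sum_bij (fun k _ => (k : ℤ) - (N + 1)) ?_ ?_ ?_ ?_
    · intro k hk; rw [mem_range] at hk; rw [Finset.mem_Icc]; omega
    · intro a _ b _ h; omega
    · intro b hb; rw [Finset.mem_Icc] at hb
      exact ⟨(b + (N + 1)).toNat, by rw [mem_range]; omega, by omega⟩
    · intro k _; rfl
  rw [h2, h3, map_sum, map_sum]
  refine sum_congr rfl fun k hk => ?_
  rw [← key]
  rw [mem_range] at hk
  obtain ⟨j, hj⟩ : ∃ j, k + j = 2 * (N + 1) := ⟨2 * (N + 1) - k, by omega⟩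
  have gp := gauss_poch ((X : R⟦X⟧) ^ d) _ k j hj
  obtain ⟨M, hM⟩ : ∃ M, M = min k j := ⟨_, rfl⟩
  have g1 : (X : R⟦X⟧) ^ M ∣ gauss (X ^ d) (2 * (N + 1)) k * ex d D - 1 := by
    have t1 := (pow_dvd_pow (X : R⟦X⟧) (by omega : M ≤ k)).trans (poch_trunc d k)
    have t2 := (pow_dvd_pow (X : R⟦X⟧) (by omega : M ≤ j)).trans (poch_trunc d j)
    have t3 := (pow_dvd_pow (X : R⟦X⟧) (by omega : M ≤ 2 * (N + 1))).trans (poch_trunc d (2 * (N + 1)))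
    rw [← (unit_ex d unit_D).dvd_mul_right]
    have e : (gauss (X ^ d) (2 * (N + 1)) k * ex d D - 1) * ex d (D : R⟦X⟧) =
      gauss (X ^ d) (2 * (N + 1)) k * ex d D * (ex d D - poch (X ^ d) k) +
      gauss (X ^ d) (2 * (N + 1)) k * poch (X ^ d) k * (ex d D - poch (X ^ d) j) -
      (ex d D - poch (X ^ d) (2 * (N + 1))) := by rw [← gp]; ring
    rw [e]
    exact dvd_sub (dvd_add (t1.mul_left _) (t2.mul_left _)) t3
  have g2 : (X : R⟦X⟧) ^ (N + 1) ∣ X ^ M * X ^ te r s ((k : ℤ) - (N + 1)) := by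
    rw [← pow_add]
    apply pow_dvd_pow
    have := te_ge r s hr hs ((k : ℤ) - (N + 1))
    rw [abs_le] at this
    omega
  have e : gauss (X ^ d) (2 * (N + 1)) k * X ^ te r s ((k : ℤ) - (N + 1)) * ex d D - X ^ te r s ((k : ℤ) - (N + 1))
    = (gauss (X ^ d) (2 * (N + 1)) k * ex d (D : R⟦X⟧) - 1) * X ^ te r s ((k : ℤ) - (N + 1)) := by ring
  rw [e]
  exact g2.trans (mul_dvd_mul_right g1 _)

end prods

section main
variable {R : Type*} [CommRing R] [TopologicalSpace R] [DiscreteTopology R]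

lemma Th_mul_coeff (r s r' s' : ℕ) (hr : 0 < r) (hs : 0 < s) (hr' : 0 < r') (hs' : 0 < s')
    (N M : ℕ) (h : N ≤ M) :
    coeff N (Th R r s * Th R r' s') =
      ∑ z ∈ Icc (-(M : ℤ)) M ×ˢ Icc (-(M : ℤ)) M, if te r s z.1 + te r' s' z.2 = N then 1 else 0 := by
  have h1 := Th_trunc R r s hr hs M
  have h2 := Th_trunc R r' s' hr' hs' M
  set A := ∑ k ∈ Icc (-(M : ℤ)) M, (X : R⟦X⟧) ^ te r s k
  set B := ∑ k ∈ Icc (-(M : ℤ)) M, (X : R⟦X⟧) ^ te r' s' k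
  have h3 : (X : R⟦X⟧) ^ (M + 1) ∣ Th R r s * Th R r' s' - A * B := by
    have : Th R r s * Th R r' s' - A * B = (Th R r s - A) * Th R r' s' + A * (Th R r' s' - B) := by ring
    rw [this]
    exact dvd_add (h1.mul_right _) (h2.mul_left _)
  have h4 := X_pow_dvd_iff.1 h3 N (by omega)
  rw [map_sub, sub_eq_zero] at h4
  rw [h4, sum_mul_sum, ← sum_product', map_sum]
  refine sum_congr rfl fun z _ => ?_
  rw [← pow_add, coeff_X_pow]
  simp [eq_comm]

lemma odd_theta (M : ℕ) :
    coeff (2 * M + 1) (Th R 1 9 * Th R 3 7) = coeff M (Th R 1 9 * Th R 3 7) := by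
  rw [Th_mul_coeff 1 9 3 7 (by omega) (by omega) (by omega) (by omega) _ (2 * M + 1) le_rfl,
    Th_mul_coeff 1 9 3 7 (by omega) (by omega) (by omega) (by omega) _ (2 * M + 1) (by omega),
    ← sum_filter, ← sum_filter]
  have t1 : ∀ k, (te 1 9 k : ℤ) = 5 * k ^ 2 - 4 * k := fun k => by
    have := te_spec 1 9 k; push_cast at this; linarith
  have t2 : ∀ k, (te 3 7 k : ℤ) = 5 * k ^ 2 - 2 * k := fun k => by
    have := te_spec 3 7 k; push_cast at this; linarith
  symm
  refine sum_bij (fun z _ => (1 - z.1 - z.2, z.1 - z.2)) ?_ ?_ ?_ ?_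
  · rintro ⟨u, v⟩ hz
    simp only [Finset.mem_filter, Finset.mem_product, Finset.mem_Icc] at hz ⊢
    have hz := hz.2
    have e : te 1 9 (1 - u - v) + te 3 7 (u - v) = 2 * M + 1 := by
      zify at hz ⊢
      rw [t1, t2] at hz ⊢
      rw [← hz]; ring
    have g1 := te_ge 1 9 (by omega) (by omega) (1 - u - v)
    have g2 := te_ge 3 7 (by omega) (by omega) (u - v)
    rw [abs_le] at g1 g2
    refine ⟨?_, e⟩
    omega
  · rintro ⟨u, v⟩ _ ⟨u', v'⟩ _ h
    simp only [Prod.mk.injEq] at h ⊢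
    omega
  · rintro ⟨k, l⟩ hz
    simp only [Finset.mem_filter, Finset.mem_product, Finset.mem_Icc] at hz
    have hz := hz.2
    have hz' : (5 * k ^ 2 - 4 * k) + (5 * l ^ 2 - 2 * l) = 2 * M + 1 := by
      rw [← t1, ← t2]; exact_mod_cast hz
    have par : (1 - k + l) % 2 = 0 := by
      have a1 : k ^ 2 % 2 = k % 2 := by
        rcases Int.emod_two_eq_zero_or_one k with h | h <;> simp [pow_two, Int.mul_emod, h]
      have a2 : l ^ 2 % 2 = l % 2 := by
        rcases Int.emod_two_eq_zero_or_one l with h | h <;> simp [pow_two, Int.mul_emod, h]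
      omega
    obtain ⟨u, hu⟩ : ∃ u, 1 - k + l = 2 * u := ⟨(1 - k + l) / 2, by omega⟩
    have hk : k = 1 - u - (u - l) := by omega
    refine ⟨(u, u - l), ?_, ?_⟩
    · simp only [Finset.mem_filter, Finset.mem_product, Finset.mem_Icc]
      have e : te 1 9 u + te 3 7 (u - l) = M := by
        zify
        rw [t1, t2]
        rw [hk] at hz'
        nlinarith
      have g1 := te_ge 1 9 (by omega) (by omega) u
      have g2 := te_ge 3 7 (by omega) (by omega) (u - l)
      rw [abs_le] at g1 g2
      refine ⟨?_, e⟩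
      omega
    · simp only [Prod.mk.injEq]; omega
  · intros; rfl

/-- gf -/
noncomputable def F : R⟦X⟧ := Pr (fun n => if 5 ∣ n then 0 else 1)
/-- odd part of gf -/
noncomputable def P : R⟦X⟧ := Pr (fun n => if n % 2 = 1 ∧ ¬ 5 ∣ n then 1 else 0)

lemma F_W : (F : R⟦X⟧) * ex 5 W = W := by
  rw [W, ex_Pr]
  refine Pr_mul _ _ _ fun n => ?_
  by_cases h : 5 ∣ n
  · left
    have : n / 5 = 0 ↔ n = 0 := by omega
    simp [h, this]
  · right
    have : n ≠ 0 := by omega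
    simp [h, this]

lemma F_P : (P : R⟦X⟧) * ex 2 F = F := by
  rw [F, ex_Pr]
  refine Pr_mul _ _ _ fun n => ?_
  by_cases h : 2 ∣ n
  · left
    have h1 : 5 ∣ n / 2 ↔ 5 ∣ n := by omega
    have h2 : n % 2 ≠ 1 := by omega
    simp [h, h1]
    intro hh; exact absurd hh h2
  · right
    have h2 : n % 2 = 1 := by omega
    simp [h, h2]

lemma P_U : (U 1 10 : R⟦X⟧) * U 9 10 * (U 3 10 * U 7 10) = P := by
  have h1 : (U 1 10 : R⟦X⟧) * U 9 10 = Pr (fun n => if n % 10 = 1 ∨ n % 10 = 9 then 1 else 0) := by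
    refine Pr_mul _ _ _ fun n => ?_
    by_cases h : n % 10 = 1 <;> simp [h]
  have h2 : (U 3 10 : R⟦X⟧) * U 7 10 = Pr (fun n => if n % 10 = 3 ∨ n % 10 = 7 then 1 else 0) := by
    refine Pr_mul _ _ _ fun n => ?_
    by_cases h : n % 10 = 3 <;> simp [h]
  rw [h1, h2]
  refine Pr_mul _ _ _ fun n => ?_
  by_cases h : n % 10 = 1 ∨ n % 10 = 9
  · right
    have a : ¬ (n % 10 = 3 ∨ n % 10 = 7) := by omega
    have b : n % 2 = 1 ∧ ¬ 5 ∣ n := by omega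
    rw [if_pos h, if_neg a, if_pos b]; simp
  · left
    have b : (n % 10 = 3 ∨ n % 10 = 7) ↔ (n % 2 = 1 ∧ ¬ 5 ∣ n) := by omega
    rw [if_neg h]; simp only [b]; simp

lemma Uodd_W : (U 1 2 : R⟦X⟧) * ex 2 W = W := by
  rw [W, ex_Pr]
  refine Pr_mul _ _ _ fun n => ?_
  by_cases h : 2 ∣ n
  · left
    have h1 : n / 2 = 0 ↔ n = 0 := by omega
    have h2 : n % 2 ≠ 1 := by omega
    simp [h, h1]
    intro hh; exact absurd hh h2
  · right
    have h2 : n % 2 = 1 := by omega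
    have : n ≠ 0 := by omega
    simp [h, h2, this]

lemma W_D : (W : R⟦X⟧) * D = ex 2 D := by
  rw [D, ex_Pr', W]
  unfold Pr
  rw [← (Pr_mult _).tprod_mul (Pr_mult _)]
  refine tprod_congr fun n => ?_
  by_cases h : n = 0
  · simp [h]
  · simp [h]; ring

lemma WW_DD (h4 : (4 : R) = 0) : (W : R⟦X⟧) * W = D * D := by
  unfold W D Pr
  rw [← (Pr_mult _).tprod_mul (Pr_mult _), ← (Pr_mult _).tprod_mul (Pr_mult _)]
  refine tprod_congr fun n => ?_
  have h4' : (4 : R⟦X⟧) = 0 := by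
    have := congrArg (C (R := R)) h4
    rw [map_zero] at this
    rw [← this]; exact (map_ofNat C 4).symm
  by_cases h : n = 0
  · simp [h]
  · simp [h]
    linear_combination X ^ n * h4'

lemma two_W_D (h4 : (4 : R) = 0) : (2 : R⟦X⟧) * W = 2 * D := by
  have h4' : (4 : R⟦X⟧) = 0 := by
    have := congrArg (C (R := R)) h4
    rw [map_zero] at this
    rw [← this]; exact (map_ofNat C 4).symm
  rw [← sub_eq_zero]
  ext N
  rw [map_zero]
  set w : ℕ → R⟦X⟧ := fun n => C (if n = 0 then 0 else 1 : R) * X ^ n with hw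
  set v : ℕ → R⟦X⟧ := fun n => C (if n = 0 then 0 else -1 : R) * X ^ n with hv
  have h1 := tprod_trunc w (fun _ => Dvd.intro_left _ rfl) (N + 1)
  have h2 := tprod_trunc v (fun _ => Dvd.intro_left _ rfl) (N + 1)
  have h3 : ∀ M, (2 : R⟦X⟧) * ∏ i ∈ range M, (1 + w i) = 2 * ∏ i ∈ range M, (1 + v i) := by
    intro M
    induction M with
    | zero => simp
    | succ M ih =>
      rw [prod_range_succ, prod_range_succ, ← mul_assoc, ih]
      by_cases h : M = 0
      · simp [hw, hv, h]
      · simp [hw, hv, h]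
        linear_combination (∏ i ∈ range M, (1 + v i)) * X ^ M * h4'
  suffices h : (X : R⟦X⟧) ^ (N + 1) ∣ 2 * W - 2 * D from X_pow_dvd_iff.1 h N (by omega)
  have e : (2 : R⟦X⟧) * W - 2 * D = 2 * (W - ∏ i ∈ range (N + 1), (1 + w i)) -
     2 * (D - ∏ i ∈ range (N + 1), (1 + v i)) := by linear_combination h3 (N + 1)
  rw [e]
  exact dvd_sub (h1.mul_left _) (h2.mul_left _)

lemma D_coeff (n : ℕ) (h : n % 5 = 3) : coeff n (D : R⟦X⟧) = 0 := by
  rw [D_eq, WithPiTopology.tprod_one_sub_X_pow]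
  apply coeff_pentagonalSeries_eq_zero
  rintro ⟨k, hk⟩
  have h2 := two_mul_natCast_pentagonal k
  rw [hk] at h2
  have h3 : (2 * (n : ℤ)) % 5 = 1 := by omega
  rw [h2] at h3
  have h5 : k % 5 = 0 ∨ k % 5 = 1 ∨ k % 5 = 2 ∨ k % 5 = 3 ∨ k % 5 = 4 := by omega
  rcases h5 with h | h | h | h | h <;> simp [Int.mul_emod, Int.sub_emod, h] at h3

lemma phi_W (h4 : (4 : R) = 0) : Th R 1 1 * W = D := by
  have j := jtp (R := R) 1 1 2 rfl (by omega) (by omega)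
  have u := Uodd_W (R := R)
  have wd := W_D (R := R)
  have ww := WW_DD (R := R) h4
  have ww2 := congrArg (ex 2) ww
  rw [map_mul, map_mul] at ww2
  have uw : IsUnit (W * W * (W : R⟦X⟧)) := (unit_W.mul unit_W).mul unit_W
  apply uw.mul_left_cancel
  have : Th R 1 1 * (ex 2 W * ex 2 W) = W * W * (W * D) := by
    rw [← j, wd]
    linear_combination (U 1 2 * ex 2 W + W) * ex 2 D * u
  rw [ww2, ← wd] at this
  linear_combination this + Th R 1 1 * W * W * ww

lemma WW (h4 : (4 : R) = 0) : (W : R⟦X⟧) * W = Th R 1 1 * ex 2 (Th R 1 1) * ex 2 W := by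
  have h := phi_W (R := R) h4
  have h' := congrArg (ex 2) h
  rw [map_mul] at h'
  rw [mul_assoc, h', ← W_D]
  rw [WW_DD h4]
  linear_combination -D * h

lemma FP (h4 : (4 : R) = 0) : (F : R⟦X⟧) * P * (ex 5 W * ex 5 W) =
    Th R 1 1 * ex 2 (Th R 1 1) * ex 10 W := by
  have uf : IsUnit (ex 2 (F : R⟦X⟧)) := unit_ex 2 (unit_Pr _ (by simp))
  apply uf.mul_left_cancel
  have a := F_W (R := R)
  have b := F_P (R := R)
  have c := WW (R := R) h4
  have a2 := congrArg (ex 2) a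
  rw [map_mul, ex_ex 2 5 10 rfl] at a2
  calc ex 2 F * (F * P * (ex 5 W * ex 5 W)) = (F * ex 5 W) * ((P * ex 2 F) * ex 5 W) := by ring
    _ = W * W := by rw [b, a]
    _ = _ := by rw [c, ← a2]; ring

lemma odd_congr (a b H : R⟦X⟧) (h : ∀ M, coeff (2 * M + 1) a = coeff (2 * M + 1) b) (M : ℕ) :
    coeff (2 * M + 1) (a * ex 2 H) = coeff (2 * M + 1) (b * ex 2 H) := by
  rw [coeff_mul, coeff_mul]
  refine sum_congr rfl fun z hz => ?_
  rw [HasAntidiagonal.mem_antidiagonal] at hz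
  by_cases h2 : 2 ∣ z.2
  · have : z.1 = 2 * (z.1 / 2) + 1 := by omega
    rw [this, h]
  · rw [ex_coeff_not 2 _ _ h2]; simp

lemma F_odd (h4 : (4 : R) = 0) (M : ℕ) : coeff (2 * M + 1) (F : R⟦X⟧) =
    coeff M (Th R 1 1 * ex 2 (Th R 1 1) * ex 10 W) := by
  have j1 := jtp (R := R) 1 9 10 rfl (by omega) (by omega)
  have j2 := jtp (R := R) 3 7 10 rfl (by omega) (by omega)
  set E : R⟦X⟧ := ex 10 D with hE
  set T := Th R 1 9 * Th R 3 7 with hT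
  have hT2 : T = P * (E * E) := by rw [hT, ← j1, ← j2, ← P_U]; ring
  have u5 : IsUnit (ex 5 (D : R⟦X⟧) * ex 5 D) := (unit_ex 5 unit_D).mul (unit_ex 5 unit_D)
  obtain ⟨V, hV⟩ := u5.exists_right_inv
  have hE5 : E = ex 2 (ex 5 D) := by rw [ex_ex 2 5 10 rfl]
  have hE5' : E = ex 5 W * ex 5 D := by rw [← map_mul, W_D, ex_ex 5 2 10 rfl]
  have hV2 := congrArg (ex 2) hV
  simp only [map_mul, map_one, ← hE5] at hV2
  have hF : (F : R⟦X⟧) = T * ex 2 (F * V) := by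
    rw [hT2, map_mul]
    calc (F : R⟦X⟧) = P * ex 2 F := F_P.symm
      _ = P * ex 2 F * (E * E * ex 2 V) := by rw [hV2, mul_one]
      _ = _ := by ring
  have hodd : ∀ M, coeff (2 * M + 1) T = coeff (2 * M + 1) (X * ex 2 T) := by
    intro M
    rw [coeff_succ_X_mul, ex_coeff_mul, hT, odd_theta]
  rw [hF, odd_congr _ _ _ hodd, mul_assoc, ← map_mul, coeff_succ_X_mul, ex_coeff_mul, ← FP h4]
  congr 1
  rw [hT2, hE5']
  linear_combination F * P * ex 5 W * ex 5 W * hV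

open Classical in
/-- squares -/
noncomputable def S : R⟦X⟧ := PowerSeries.mk fun n => if n ≠ 0 ∧ ∃ x : ℕ, n = x ^ 2 then 1 else 0

open Classical in
lemma phi_S : Th R 1 1 = 1 + 2 * S := by
  ext N
  have t : ∀ k, (te 1 1 k : ℤ) = k ^ 2 := fun k => by
    have := te_spec 1 1 k; push_cast at this; linarith
  have e2 : (2 : R⟦X⟧) = C 2 := (map_ofNat C 2).symm
  rw [Th, coeff_mk, map_add, e2, coeff_C_mul, S, coeff_mk, coeff_one]
  by_cases h0 : N = 0
  · subst h0
    have : te 1 1 0 = 0 := by have := t 0; simpa using this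
    simp [filter_singleton, this]
  · by_cases hx : ∃ x : ℕ, N = x ^ 2
    · obtain ⟨x, rfl⟩ := hx
      have x0 : x ≠ 0 := by rintro rfl; simp at h0
      have hf : (Icc (-((x ^ 2 : ℕ) : ℤ)) (x ^ 2 : ℕ)).filter (fun k => te 1 1 k = x ^ 2) = {(x : ℤ), -(x : ℤ)} := by
        ext k
        have t := t k
        have iff1 : te 1 1 k = x ^ 2 ↔ k ^ 2 = (x : ℤ) ^ 2 := by rw [← t]; norm_cast
        rw [Finset.mem_filter, iff1, sq_eq_sq_iff_eq_or_eq_neg, Finset.mem_Icc]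
        simp only [mem_insert, mem_singleton]
        refine ⟨fun h => h.2, fun h => ⟨?_, h⟩⟩
        have : (1 : ℤ) ≤ x := by omega
        push_cast
        rcases h with rfl | rfl <;> constructor <;> nlinarith
      rw [← sum_filter, hf, sum_pair (by omega), if_neg h0, if_pos ⟨h0, x, rfl⟩]
      ring
    · rw [if_neg h0, if_neg (by tauto), sum_eq_zero]
      · ring
      · intro k _
        rw [if_neg]
        intro hk
        apply hx
        refine ⟨k.natAbs, ?_⟩
        have := t k
        rw [hk] at this
        zify
        rw [this, sq_abs]

lemma F_coeff (h4 : (4 : R) = 0) (n : ℕ) : coeff (100 * n + 11) (F : R⟦X⟧) = 0 := by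
  have h4' : (4 : R⟦X⟧) = 0 := by
    have := congrArg (C (R := R)) h4
    rw [map_zero] at this
    rw [← this]; exact (map_ofNat C 4).symm
  rw [show 100 * n + 11 = 2 * (50 * n + 5) + 1 by ring, F_odd h4, phi_S]
  have e : (1 + 2 * S) * ex 2 (1 + 2 * S) * ex 10 (W : R⟦X⟧) =
    ex 2 ((1 + 2 * S) * ex 5 W) + S * ex 10 (2 * D) := by
    rw [← two_W_D h4]
    simp only [map_mul, map_add, map_one, map_ofNat, ex_ex 2 5 10 rfl]
    linear_combination S * ex 2 S * ex 10 (W : R⟦X⟧) * h4'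
  rw [e, map_add, ex_coeff_not 2 _ _ (by omega), zero_add, coeff_mul]
  apply sum_eq_zero
  rintro ⟨i, j⟩ hz
  rw [HasAntidiagonal.mem_antidiagonal] at hz
  simp only at hz ⊢
  by_cases hj : 10 ∣ j
  · obtain ⟨w, rfl⟩ := hj
    rw [ex_coeff_mul, S, coeff_mk]
    by_cases hi : i ≠ 0 ∧ ∃ x : ℕ, i = x ^ 2
    · obtain ⟨_, x, rfl⟩ := hi
      have hw : w % 5 = 3 := by
        have h1 : x ^ 2 % 10 = 5 := by omega
        have h2 : x % 10 = 5 := by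
          have : x % 10 < 10 := Nat.mod_lt _ (by norm_num)
          rw [Nat.pow_mod] at h1
          interval_cases h : x % 10 <;> simp_all
        obtain ⟨y, hy⟩ : ∃ y, x = 10 * y + 5 := ⟨x / 10, by omega⟩
        rw [hy] at hz
        have : (10 * y + 5) ^ 2 = 50 * (2 * y ^ 2 + 2 * y) + 25 := by ring
        omega
      have e2 : (2 : R⟦X⟧) = C 2 := (map_ofNat C 2).symm
      rw [e2, coeff_C_mul, D_coeff w hw]; simp
    · rw [if_neg hi, zero_mul]
  · rw [ex_coeff_not 10 _ _ hj, mul_zero]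

lemma F_b5 (n : ℕ) : coeff n (F : R⟦X⟧) = (b5' n : R) := by
  have h := Nat.Partition.genFun_eq_tprod (R := R) (fun i c => if c = 1 ∧ ¬ 5 ∣ i then 1 else 0)
  have hF : (F : R⟦X⟧) = Nat.Partition.genFun (R := R) (fun i c => if c = 1 ∧ ¬ 5 ∣ i then 1 else 0) := by
    rw [h]
    unfold F Pr
    rw [← Nat.succ_injective.tprod_eq (f := fun n => 1 + C (if 5 ∣ n then 0 else 1) * (X : R⟦X⟧) ^ n)]
    · refine tprod_congr fun n => ?_
      congr 1
      rw [tsum_eq_single 0]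
      · by_cases h : 5 ∣ n + 1 <;> simp [h]
      · intro j hj; simp [hj]
    · intro n hn
      cases n with
      | zero => simp at hn
      | succ n => exact ⟨n, rfl⟩
  rw [hF, Nat.Partition.coeff_genFun, b5', Nat.Partition.distincts, filter_filter, card_filter]
  push_cast
  refine sum_congr rfl fun p _ => ?_
  rw [Finsupp.prod, prod_boole]
  congr 1
  simp only [Multiset.toFinsupp_support, Multiset.mem_toFinset, Multiset.toFinsupp_apply, eq_iff_iff]
  constructor
  · intro h
    refine ⟨Multiset.nodup_iff_count_le_one.2 fun i => ?_, fun i hi => (h i hi).2⟩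
    by_cases hi : i ∈ p.parts
    · exact (h i hi).1.le
    · simp [Multiset.count_eq_zero_of_notMem hi]
  · rintro ⟨h1, h2⟩ i hi
    exact ⟨Multiset.count_eq_one_of_mem h1 hi, h2 i hi⟩

end main
end B5

theorem b5'_100n11_mod4 (n : ℕ) : b5' (100 * n + 11) ≡ 0 [MOD 4] := by
  let _ : TopologicalSpace (ZMod 4) := ⊥
  have _ : DiscreteTopology (ZMod 4) := ⟨rfl⟩
  have h := B5.F_coeff (R := ZMod 4) (by decide) n
  rw [B5.F_b5] at h
  rw [← ZMod.natCast_eq_natCast_iff, h]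
  simp
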